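/- Let m > 2 be a prime number and s = 2 (so p odd). Then P_m(0,2,h) = (q^{p−1} − q)/(2p) if m = p, and P_m(0,2,h) = (q^{m−1} − 1)/(2m) if m ≠ p. For a ≠ 0, P_m(a,2,h) = (q^{p−1} + S)/(2p) if m = p, and P_m(a,2,h) = (q^{m−1} + S − (−1)^h·ρ(m·a) − 1)/(2m) if m ≠ p, where S = (−1)^h·q^{(m−1)/2}·ρ((−1)^{(m−1)/2}·a) and m·a denotes (m mod p)·a in F_q. -/

import Mathlib

noncomputable section

open Complex Polynomial Classical

/-- `P_m(a,s,h)`: the number of monic irreducible `f = x^m − a x^{m-1} + ⋯ + (−1)^m b`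
of degree `m` over `F` with `b ∈ g^h·⟨g^s⟩`. -/
def PP (F : Type*) [Field F] [Fintype F] (g : F) (m s h : ℕ) (a : F) : ℕ :=
  Nat.card {f : Polynomial F // f.Monic ∧ f.natDegree = m ∧ Irreducible f ∧
    f.coeff (m - 1) = -a ∧ ∃ k : ℕ, (-1 : F) ^ m * f.coeff 0 = g ^ (h + s * k)}

/-!
Let `E / F` have odd prime degree `m`. A monic irreducible polynomial of degree `m` is the minimal
polynomial of exactly `m` elements of `E` outside `F`, and for such an element trace and norm are
read off the coefficients; moreover `ρ_E = ρ_F ∘ N`. So `m · P_m(a, 2, h)` counts the `x ∈ E \ F`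
with `Tr x = a` and `ρ_E x = (-1) ^ h`, and only `T a = ∑_{Tr x = a} ρ_E x` is not elementary.

Homogeneity, `T (c a) = ρ_F c · T a` for `c ≠ 0`, reduces `T` to `T 1`. If `G` is the quadratic
Gauss sum of a nontrivial additive character `ψ` of `F`, the Gauss sum of `ψ ∘ Tr` is then
`T 1 · G`. It is also `∑_y ψ (Tr (y ^ 2))`, which equals `G ^ m` because the trace form can be
diagonalized and its discriminant is a square in `F`, `m` being odd. Hence
`T 1 = G ^ (m - 1) = (ρ_F (-1) q) ^ ((m - 1) / 2)`.
-/

section FinsetNotation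

open scoped Finset

section QuadraticChar

variable {F E : Type*} [Field F] [Fintype F] [Field E] [Fintype E] [Algebra F E]

theorem norm_pow_card_div_two (hF : ringChar F ≠ 2) (x : E) :
    algebraMap F E (Algebra.norm F x ^ (Fintype.card F / 2)) = x ^ (Fintype.card E / 2) := by
  have hE : ringChar E ≠ 2 := Algebra.ringChar_eq F E ▸ hF
  have hF_odd := FiniteField.odd_card_of_char_ne_two hF
  have hE_odd := FiniteField.odd_card_of_char_ne_two hE
  have hF_one : 1 < Fintype.card F := Fintype.one_lt_card
  obtain ⟨c, hc⟩ : Fintype.card F - 1 ∣ Fintype.card E - 1 := by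
    rw [Module.card_eq_pow_finrank (K := F) (V := E)]
    simpa using Nat.sub_dvd_pow_sub_pow (Fintype.card F) 1 (Module.finrank F E)
  have hc_half : Fintype.card E / 2 = c * (Fintype.card F / 2) := by
    have h₁ : Fintype.card F - 1 = 2 * (Fintype.card F / 2) := by omega
    have h₂ : Fintype.card E - 1 = 2 * (Fintype.card E / 2) := by omega
    rw [h₁, h₂] at hc
    linarith
  rw [map_pow, FiniteField.algebraMap_norm_eq_pow, Nat.card_eq_fintype_card,
    Nat.card_eq_fintype_card, hc, Nat.mul_div_cancel_left _ (by omega), ← pow_mul, hc_half]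

variable [DecidableEq F] [DecidableEq E]

theorem quadraticChar_norm (x : E) : quadraticChar F (Algebra.norm F x) = quadraticChar E x := by
  obtain rfl | hx := eq_or_ne x 0
  · simp only [Algebra.norm_zero, quadraticChar_zero]
  have hN : Algebra.norm F x ≠ 0 := Algebra.norm_ne_zero_iff.2 hx
  have hchar : ringChar F = ringChar E := Algebra.ringChar_eq F E
  by_cases hF : ringChar F = 2
  · rw [quadraticChar_eq_one_of_char_two hF hN, quadraticChar_eq_one_of_char_two (hchar ▸ hF) hx]
  · rw [quadraticChar_eq_pow_of_char_ne_two hF hN,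
      quadraticChar_eq_pow_of_char_ne_two (hchar ▸ hF) hx, ← norm_pow_card_div_two hF x]
    simp only [map_eq_one_iff (algebraMap F E) (algebraMap F E).injective]

theorem quadraticChar_algebraMap_of_odd_finrank (hodd : Odd (Module.finrank F E)) (x : F) :
    quadraticChar E (algebraMap F E x) = quadraticChar F x := by
  obtain ⟨k, hk⟩ := hodd
  rw [← quadraticChar_norm (F := F), Algebra.norm_algebraMap, map_pow, hk]
  obtain rfl | hx := eq_or_ne x 0
  · simp
  · rw [pow_succ, pow_mul, quadraticChar_sq_one hx, one_pow, one_mul]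

theorem two_mul_card_filter_quadraticChar_eq (s : Finset F) {ε : ℤ} (hε : ε = 1 ∨ ε = -1) :
    (2 * #{x ∈ s | quadraticChar F x = ε} : ℤ) =
      #s - (if 0 ∈ s then 1 else 0) + ε * ∑ x ∈ s, quadraticChar F x := by
  have hpoint (x : F) : 2 * (if quadraticChar F x = ε then 1 else 0) =
      1 - (if x = 0 then 1 else 0) + ε * quadraticChar F x := by
    obtain rfl | hx := eq_or_ne x 0
    · rcases hε with rfl | rfl <;> simp
    · rcases quadraticChar_dichotomy hx with h | h <;> rcases hε with rfl | rfl <;> simp [h, hx]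
  rw [Finset.card_filter, Nat.cast_sum, Finset.mul_sum]
  push_cast
  simp only [hpoint, Finset.sum_add_distrib, Finset.sum_sub_distrib, Finset.sum_ite_eq',
    Finset.sum_const, nsmul_one, ← Finset.mul_sum]

theorem two_mul_card_quadraticChar_eq (hF : ringChar F ≠ 2) {ε : ℤ} (hε : ε = 1 ∨ ε = -1) :
    (2 * #{x : F | quadraticChar F x = ε} : ℤ) = Fintype.card F - 1 := by
  rw [two_mul_card_filter_quadraticChar_eq _ hε, quadraticChar_sum_zero hF, Finset.card_univ]
  simp

theorem two_mul_card_mul_eq_and_quadraticChar_eq {c : F} (hc : c ≠ 0) (a : F) {ε : ℤ}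
    (hε : ε = 1 ∨ ε = -1) :
    (2 * #{x : F | c * x = a ∧ quadraticChar F x = ε} : ℤ) =
      1 - (if a = 0 then 1 else 0) + ε * quadraticChar F (c * a) := by
  have hsol : ({x : F | c * x = a} : Finset F) = {a / c} := by
    ext x
    simp only [Finset.mem_filter_univ, Finset.mem_singleton, eq_div_iff hc, mul_comm]
  have hquot : quadraticChar F (a / c) = quadraticChar F (c * a) := by
    rw [show c * a = c ^ 2 * (a / c) by field_simp, map_mul, quadraticChar_sq_one' hc, one_mul]
  have hzero : 0 = a / c ↔ a = 0 := by rw [eq_comm, div_eq_zero_iff, or_iff_left hc]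
  rw [← Finset.filter_filter, two_mul_card_filter_quadraticChar_eq _ hε, hsol]
  simp only [Finset.card_singleton, Finset.mem_singleton, Finset.sum_singleton, hzero, hquot,
    Nat.cast_one]

theorem quadraticChar_generator (hF : ringChar F ≠ 2) {g : Fˣ}
    (hg : ∀ u : Fˣ, u ∈ Subgroup.zpowers g) : quadraticChar F (g : F) = -1 := by
  refine (quadraticChar_dichotomy g.ne_zero).resolve_left fun hone => ?_
  obtain ⟨u, hu⟩ := quadraticChar_exists_neg_one' hF
  obtain ⟨n, rfl⟩ := mem_powers_iff_mem_zpowers.2 (hg u)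
  rw [Units.val_pow_eq_pow_val, map_pow, hone, one_pow] at hu
  exact absurd hu (by decide)

theorem exists_eq_generator_pow_iff (hF : ringChar F ≠ 2) {g : Fˣ}
    (hg : ∀ u : Fˣ, u ∈ Subgroup.zpowers g) {h : ℕ} (hh : h < 2) (b : F) :
    (∃ k : ℕ, b = (g : F) ^ (h + 2 * k)) ↔ quadraticChar F b = (-1) ^ h := by
  have hρ := quadraticChar_generator hF hg
  constructor
  · rintro ⟨k, rfl⟩
    rw [map_pow, hρ, pow_add, pow_mul, neg_one_sq, one_pow, mul_one]
  · intro hb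
    have hb0 : b ≠ 0 := by
      rintro rfl
      exact pow_ne_zero h (by decide : (-1 : ℤ) ≠ 0) (hb.symm.trans quadraticChar_zero)
    obtain ⟨n, hn⟩ := mem_powers_iff_mem_zpowers.2 (hg (Units.mk0 b hb0))
    obtain rfl : (g : F) ^ n = b := by simpa using congrArg Units.val hn
    rw [map_pow, hρ, neg_one_pow_eq_pow_mod_two] at hb
    have hmod : n % 2 = h := by
      have := Nat.mod_lt n two_pos
      interval_cases n % 2 <;> interval_cases h <;> simp_all
    exact ⟨n / 2, by rw [← hmod, Nat.mod_add_div]⟩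

end QuadraticChar

section TraceForm

variable {K L : Type*} [Field K] [Field L] [Algebra K L]

theorem isSquare_algebraMap_discr [FiniteDimensional K L] [IsGalois K L] {ι : Type*}
    [Fintype ι] [DecidableEq ι] (b : Module.Basis ι K L) :
    IsSquare (algebraMap K L (Algebra.discr K b)) := by
  obtain ⟨e⟩ : Nonempty (ι ≃ (L ≃ₐ[K] L)) := by
    rw [← Fintype.card_eq, ← Nat.card_eq_fintype_card (α := L ≃ₐ[K] L),
      IsGalois.card_aut_eq_finrank, Module.finrank_eq_card_basis b]
  let M : Matrix ι ι L := .of fun i j => e j (b i)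
  have hM : (algebraMap K L).mapMatrix (Algebra.traceMatrix K b) = M * M.transpose := by
    ext i j
    simp [M, Matrix.mul_apply, Algebra.traceMatrix_apply, Algebra.traceForm_apply,
      trace_eq_sum_automorphisms, ← e.sum_comp]
  refine ⟨M.det, ?_⟩
  rw [Algebra.discr_def, RingHom.map_det, hM, Matrix.det_mul, Matrix.det_transpose]

theorem exists_basis_traceForm_iIsOrtho [FiniteDimensional K L] [Algebra.IsSeparable K L]
    (h2 : (2 : K) ≠ 0) :
    ∃ b : Module.Basis (Fin (Module.finrank K L)) K L, (Algebra.traceForm K L).iIsOrtho b := by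
  have : Invertible (2 : K) := invertibleOfNonzero h2
  exact LinearMap.BilinForm.exists_orthogonal_basis ⟨(Algebra.traceForm_isSymm K).eq⟩

variable {ι : Type*} [Fintype ι] {b : Module.Basis ι K L}

theorem trace_sum_smul_sq_of_iIsOrtho (hb : (Algebra.traceForm K L).iIsOrtho b) (c : ι → K) :
    Algebra.trace K L ((∑ i, c i • b i) ^ 2) = ∑ i, Algebra.trace K L (b i ^ 2) * c i ^ 2 := by
  have hortho (i j : ι) (hij : i ≠ j) : Algebra.trace K L (b i * b j) = 0 := hb hij
  rw [sq, Finset.sum_mul_sum, map_sum]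
  refine Finset.sum_congr rfl fun i _ => ?_
  rw [map_sum, Finset.sum_eq_single_of_mem i (Finset.mem_univ i)]
  · rw [smul_mul_smul_comm, map_smul, smul_eq_mul, ← sq, ← sq, mul_comm]
  · intro j _ hji
    rw [smul_mul_smul_comm, map_smul, hortho i j hji.symm, smul_zero]

theorem discr_of_iIsOrtho [DecidableEq ι] (hb : (Algebra.traceForm K L).iIsOrtho b) :
    Algebra.discr K b = ∏ i, Algebra.trace K L (b i ^ 2) := by
  have hdiag : Algebra.traceMatrix K b = .diagonal fun i => Algebra.trace K L (b i ^ 2) := by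
    ext i j
    obtain rfl | hij := eq_or_ne i j
    · rw [Algebra.traceMatrix_apply, Algebra.traceForm_apply, Matrix.diagonal_apply_eq, sq]
    · rw [Matrix.diagonal_apply_ne _ hij]
      exact hb hij
  rw [Algebra.discr_def, hdiag, Matrix.det_diagonal]

end TraceForm

section GaussSum

variable {F R : Type*} [Field F] [Fintype F] [DecidableEq F] [CommRing R]

/-- The quadratic Gauss sum `∑ x, ρ(x) ψ(x)` of an additive character `ψ`, the quadratic character
`ρ` of `F` being made `R`-valued so that `gaussSum` applies. -/
def quadraticGaussSum (ψ : AddChar F R) : R :=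
  gaussSum ((quadraticChar F).ringHomComp (Int.castRingHom R)) ψ

theorem quadraticGaussSum_eq_sum (ψ : AddChar F R) :
    quadraticGaussSum ψ = ∑ x, (quadraticChar F x : R) * ψ x := rfl

theorem quadraticGaussSum_mulShift (ψ : AddChar F R) {d : F} (hd : d ≠ 0) :
    quadraticGaussSum (ψ.mulShift d) = quadraticChar F d * quadraticGaussSum ψ := by
  have hshift := gaussSum_mulShift ((quadraticChar F).ringHomComp (Int.castRingHom R)) ψ
    (Units.mk0 d hd)
  have hsq : (quadraticChar F d : R) * quadraticChar F d = 1 := by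
    rw [← Int.cast_mul, ← sq, quadraticChar_sq_one hd, Int.cast_one]
  simp only [MulChar.ringHomComp_apply, Units.val_mk0, eq_intCast] at hshift
  rw [quadraticGaussSum, quadraticGaussSum, ← hshift, ← mul_assoc, hsq, one_mul]

theorem sum_addChar_map_sq [IsDomain R] (hF : ringChar F ≠ 2) {ψ : AddChar F R} (hψ : ψ ≠ 1) :
    ∑ y, ψ (y ^ 2) = quadraticGaussSum ψ := by
  have hsqrts (x : F) : (#{y : F | y ^ 2 = x} : R) = quadraticChar F x + 1 := by
    have h := quadraticChar_card_sqrts hF x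
    rw [Set.toFinset_ofPred] at h
    exact_mod_cast congrArg (Int.cast : ℤ → R) h
  calc ∑ y, ψ (y ^ 2)
      = ∑ x, ∑ y with y ^ 2 = x, ψ x := (Finset.sum_fiberwise' _ _ _).symm
    _ = ∑ x, ((quadraticChar F x : R) + 1) * ψ x := by
        simp only [Finset.sum_const, nsmul_eq_mul, hsqrts]
    _ = quadraticGaussSum ψ := by
        simp only [add_mul, one_mul, Finset.sum_add_distrib, AddChar.sum_eq_zero_of_ne_one hψ,
          add_zero, quadraticGaussSum_eq_sum]

theorem sum_addChar_mul_sq [IsDomain R] (hF : ringChar F ≠ 2) {ψ : AddChar F R} (hψ : ψ ≠ 1)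
    {d : F} (hd : d ≠ 0) :
    ∑ y, ψ (d * y ^ 2) = quadraticChar F d * quadraticGaussSum ψ := by
  rw [← quadraticGaussSum_mulShift ψ hd,
    ← sum_addChar_map_sq hF (AddChar.IsPrimitive.of_ne_one hψ hd)]
  simp only [AddChar.mulShift_apply]

theorem addChar_map_sum {A M ι : Type*} [AddCommMonoid A] [CommMonoid M] (ψ : AddChar A M)
    (s : Finset ι) (f : ι → A) : ψ (∑ i ∈ s, f i) = ∏ i ∈ s, ψ (f i) :=
  map_prod ψ.toMonoidHom (fun i => Multiplicative.ofAdd (f i)) s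

theorem sum_addChar_diagonal [IsDomain R] (hF : ringChar F ≠ 2) {ψ : AddChar F R} (hψ : ψ ≠ 1)
    {ι : Type*} [Fintype ι] [DecidableEq ι] {d : ι → F} (hd : ∀ i, d i ≠ 0) :
    ∑ c : ι → F, ψ (∑ i, d i * c i ^ 2) =
      quadraticChar F (∏ i, d i) * quadraticGaussSum ψ ^ Fintype.card ι := by
  simp only [addChar_map_sum, map_prod, Int.cast_prod]
  rw [← Fintype.prod_sum fun i x => ψ (d i * x ^ 2)]
  simp only [sum_addChar_mul_sq hF hψ (hd _), Finset.prod_mul_distrib, Finset.prod_const,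
    Finset.card_univ]

theorem quadraticGaussSum_sq [IsDomain R] [CharZero R] (hF : ringChar F ≠ 2) {ψ : AddChar F R}
    (hψ : ψ ≠ 1) : quadraticGaussSum ψ ^ 2 = (quadraticChar F (-1) * Fintype.card F : ℤ) := by
  have hinj := RingHom.injective_int (Int.castRingHom R)
  simpa [quadraticGaussSum] using gaussSum_sq
    ((MulChar.ringHomComp_ne_one_iff hinj).2 (quadraticChar_ne_one hF))
    ((quadraticChar_isQuadratic F).comp _) (AddChar.IsPrimitive.of_ne_one hψ)

theorem quadraticGaussSum_ne_zero [IsDomain R] [CharZero R] (hF : ringChar F ≠ 2)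
    {ψ : AddChar F R} (hψ : ψ ≠ 1) : quadraticGaussSum ψ ≠ 0 :=
  gaussSum_ne_zero_of_nontrivial (Nat.cast_ne_zero.2 Fintype.card_ne_zero)
    ((MulChar.ringHomComp_ne_one_iff (RingHom.injective_int (Int.castRingHom R))).2
      (quadraticChar_ne_one hF)) (AddChar.IsPrimitive.of_ne_one hψ)

end GaussSum

section TraceLift

variable {F R : Type*} [Field F] [CommRing R] (E : Type*) [Field E] [Algebra F E]

/-- The lift `ψ ∘ Tr` of an additive character `ψ` of `F` to the extension `E`. -/
def traceLift (ψ : AddChar F R) : AddChar E R :=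
  ψ.compAddMonoidHom (Algebra.trace F E).toAddMonoidHom

theorem traceLift_apply (ψ : AddChar F R) (x : E) : traceLift E ψ x = ψ (Algebra.trace F E x) := rfl

theorem traceLift_ne_one [Finite F] [Finite E] {ψ : AddChar F R} (hψ : ψ ≠ 1) :
    traceLift E ψ ≠ 1 := by
  obtain ⟨a, ha⟩ := AddChar.ne_one_iff.1 hψ
  obtain ⟨x, rfl⟩ := Algebra.trace_surjective F E a
  exact AddChar.ne_one_iff.2 ⟨x, ha⟩

-- The Hasse–Davenport relation for quadratic characters in odd degree.
theorem quadraticGaussSum_traceLift [Fintype F] [DecidableEq F] [Fintype E] [DecidableEq E]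
    [IsDomain R] (hF : ringChar F ≠ 2) {ψ : AddChar F R} (hψ : ψ ≠ 1)
    (hodd : Odd (Module.finrank F E)) :
    quadraticGaussSum (traceLift E ψ) = quadraticGaussSum ψ ^ Module.finrank F E := by
  obtain ⟨b, hb⟩ := exists_basis_traceForm_iIsOrtho (L := E) (Ring.two_ne_zero hF)
  have hdiscr : ∏ i, Algebra.trace F E (b i ^ 2) ≠ 0 :=
    discr_of_iIsOrtho hb ▸ Algebra.discr_not_zero_of_basis F b
  have hρ : quadraticChar F (∏ i, Algebra.trace F E (b i ^ 2)) = 1 := by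
    rw [← quadraticChar_algebraMap_of_odd_finrank (E := E) hodd,
      quadraticChar_one_iff_isSquare ((_root_.map_ne_zero _).2 hdiscr), ← discr_of_iIsOrtho hb]
    exact isSquare_algebraMap_discr b
  calc quadraticGaussSum (traceLift E ψ)
      = ∑ y : E, ψ (Algebra.trace F E (y ^ 2)) :=
        (sum_addChar_map_sq (Algebra.ringChar_eq F E ▸ hF) (traceLift_ne_one E hψ)).symm
    _ = ∑ c : Fin (Module.finrank F E) → F, ψ (∑ i, Algebra.trace F E (b i ^ 2) * c i ^ 2) := by
        rw [← b.equivFun.symm.toEquiv.sum_comp]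
        simp only [LinearEquiv.coe_toEquiv, Module.Basis.equivFun_symm_apply,
          trace_sum_smul_sq_of_iIsOrtho hb]
    _ = quadraticGaussSum ψ ^ Module.finrank F E := by
        have hcoeff i := Finset.prod_ne_zero_iff.1 hdiscr i (Finset.mem_univ i)
        rw [sum_addChar_diagonal hF hψ hcoeff, hρ, Int.cast_one, one_mul, Fintype.card_fin]

end TraceLift

section TraceFiber

variable {F E : Type*} [Field F] [DecidableEq F] [Field E] [Fintype E] [Algebra F E]

theorem card_trace_fiber [Fintype F] (a : F) :
    #{x : E | Algebra.trace F E x = a} = Fintype.card F ^ (Module.finrank F E - 1) := by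
  have hsurj := Algebra.trace_surjective F E
  have hfiber (b : F) :
      #{x : E | Algebra.trace F E x = b} = #{x : E | Algebra.trace F E x = a} :=
    AddMonoidHom.card_fiber_eq_of_mem_range (Algebra.trace F E) (hsurj b) (hsurj a)
  refine Nat.eq_of_mul_eq_mul_left (Fintype.card_pos (α := F)) ?_
  calc Fintype.card F * #{x : E | Algebra.trace F E x = a}
      = ∑ b : F, #{x : E | Algebra.trace F E x = b} := by
        simp only [hfiber, Finset.sum_const, Finset.card_univ, smul_eq_mul]
    _ = Fintype.card E := (Finset.card_eq_sum_card_fiberwise fun _ _ => Finset.mem_univ _).symm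
    _ = Fintype.card F * Fintype.card F ^ (Module.finrank F E - 1) := by
        rw [Module.card_eq_pow_finrank (K := F) (V := E),
          mul_pow_sub_one (Module.finrank_pos (R := F) (M := E)).ne']

variable [DecidableEq E]

variable (F E) in
/-- The sum of the quadratic character of `E` over the elements of trace `a` in `F`. -/
def traceCharSum (a : F) : ℤ :=
  ∑ x : E with Algebra.trace F E x = a, quadraticChar E x

theorem traceCharSum_mul [Fintype F] (hodd : Odd (Module.finrank F E)) {c : F} (hc : c ≠ 0)
    (a : F) :
    traceCharSum F E (c * a) = quadraticChar F c * traceCharSum F E a := by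
  have hc' : algebraMap F E c ≠ 0 := (_root_.map_ne_zero _).2 hc
  simp only [traceCharSum, Finset.mul_sum, Finset.sum_filter]
  refine (Fintype.sum_equiv (Equiv.mulLeft₀ _ hc') _ _ fun x => ?_).symm
  have htrace : Algebra.trace F E (algebraMap F E c * x) = c * Algebra.trace F E x := by
    rw [← Algebra.smul_def, map_smul, smul_eq_mul]
  simp only [Equiv.mulLeft₀_apply, htrace, mul_right_inj' hc, map_mul, mul_ite, mul_zero,
    quadraticChar_algebraMap_of_odd_finrank hodd]

theorem traceCharSum_zero [Finite F] (hF : ringChar F ≠ 2) (hodd : Odd (Module.finrank F E)) :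
    traceCharSum F E 0 = 0 := by
  have := Fintype.ofFinite F
  obtain ⟨c, hc⟩ := quadraticChar_exists_neg_one' hF
  have h := traceCharSum_mul (E := E) hodd c.ne_zero 0
  rw [mul_zero, hc] at h
  omega

variable [Fintype F]

theorem traceCharSum_eq_mul_traceCharSum_one (hF : ringChar F ≠ 2)
    (hodd : Odd (Module.finrank F E)) (a : F) :
    traceCharSum F E a = quadraticChar F a * traceCharSum F E 1 := by
  obtain rfl | ha := eq_or_ne a 0
  · rw [traceCharSum_zero hF hodd, quadraticChar_zero, zero_mul]
  · rw [← traceCharSum_mul hodd ha, mul_one]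

theorem quadraticGaussSum_traceLift_eq_traceCharSum_one_mul {R : Type*} [CommRing R]
    (hF : ringChar F ≠ 2) (hodd : Odd (Module.finrank F E)) (ψ : AddChar F R) :
    quadraticGaussSum (traceLift E ψ) = traceCharSum F E 1 * quadraticGaussSum ψ := by
  calc quadraticGaussSum (traceLift E ψ)
      = ∑ a : F, ∑ x : E with Algebra.trace F E x = a, (quadraticChar E x : R) * traceLift E ψ x :=
        (Finset.sum_fiberwise _ _ _).symm
    _ = ∑ a : F, (traceCharSum F E a : R) * ψ a := by
        refine Finset.sum_congr rfl fun a _ => ?_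
        rw [traceCharSum, Int.cast_sum, Finset.sum_mul]
        refine Finset.sum_congr rfl fun x hx => ?_
        rw [traceLift_apply, (Finset.mem_filter.1 hx).2]
    _ = traceCharSum F E 1 * quadraticGaussSum ψ := by
        rw [quadraticGaussSum_eq_sum, Finset.mul_sum]
        refine Finset.sum_congr rfl fun a _ => ?_
        rw [traceCharSum_eq_mul_traceCharSum_one hF hodd]
        push_cast
        ring

theorem traceCharSum_one (hF : ringChar F ≠ 2) {k : ℕ} (hk : Module.finrank F E = 2 * k + 1) :
    traceCharSum F E 1 = (quadraticChar F (-1) * Fintype.card F) ^ k := by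
  obtain ⟨ψ, hψ⟩ : ∃ ψ : AddChar F ℂ, ψ ≠ 1 := by
    obtain ⟨ψ, hψ⟩ := (AddChar.exists_apply_ne_zero (a := (1 : F))).2 one_ne_zero
    exact ⟨ψ, AddChar.ne_one_iff.2 ⟨1, hψ⟩⟩
  have hodd : Odd (Module.finrank F E) := ⟨k, hk⟩
  have hG : (traceCharSum F E 1 : ℂ) * quadraticGaussSum ψ =
      (quadraticGaussSum ψ ^ 2) ^ k * quadraticGaussSum ψ := by
    rw [← quadraticGaussSum_traceLift_eq_traceCharSum_one_mul hF hodd,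
      quadraticGaussSum_traceLift E hF hψ hodd, hk, pow_succ, pow_mul]
  have hT := mul_right_cancel₀ (quadraticGaussSum_ne_zero hF hψ) hG
  rw [quadraticGaussSum_sq hF hψ] at hT
  exact_mod_cast hT

theorem traceCharSum_eq (hF : ringChar F ≠ 2) {k : ℕ} (hk : Module.finrank F E = 2 * k + 1)
    (a : F) : traceCharSum F E a = (Fintype.card F : ℤ) ^ k * quadraticChar F ((-1) ^ k * a) := by
  rw [traceCharSum_eq_mul_traceCharSum_one hF ⟨k, hk⟩, traceCharSum_one hF hk, map_mul, map_pow]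
  ring

theorem two_mul_card_trace_eq_and_quadraticChar_eq (a : F) {ε : ℤ} (hε : ε = 1 ∨ ε = -1) :
    (2 * #{x : E | Algebra.trace F E x = a ∧ quadraticChar E x = ε} : ℤ) =
      (Fintype.card F : ℤ) ^ (Module.finrank F E - 1) - (if a = 0 then 1 else 0) +
        ε * traceCharSum F E a := by
  rw [← Finset.filter_filter, two_mul_card_filter_quadraticChar_eq _ hε, card_trace_fiber,
    traceCharSum]
  simp only [Finset.mem_filter_univ, map_zero, eq_comm (a := (0 : F)), Nat.cast_pow]

theorem card_mem_range_trace_eq_and_quadraticChar_eq (hodd : Odd (Module.finrank F E)) (a : F)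
    (ε : ℤ) :
    #{x : E | (Algebra.trace F E x = a ∧ quadraticChar E x = ε) ∧ x ∈ (algebraMap F E).range} =
      #{x : F | (Module.finrank F E : F) * x = a ∧ quadraticChar F x = ε} := by
  rw [← Finset.card_map ⟨algebraMap F E, (algebraMap F E).injective⟩]
  congr 1
  ext y
  simp only [Finset.mem_filter_univ, Finset.mem_map, Function.Embedding.coeFn_mk, RingHom.mem_range]
  constructor
  · rintro ⟨hy, x, rfl⟩
    rw [Algebra.trace_algebraMap, quadraticChar_algebraMap_of_odd_finrank hodd,
      nsmul_eq_mul] at hy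
    exact ⟨x, hy, rfl⟩
  · rintro ⟨x, hx, rfl⟩
    rw [Algebra.trace_algebraMap, quadraticChar_algebraMap_of_odd_finrank hodd, nsmul_eq_mul]
    exact ⟨hx, x, rfl⟩

end TraceFiber

section Minpoly

section Field

variable {K L : Type*} [Field K] [Field L] [Algebra K L] [FiniteDimensional K L]

theorem natDegree_minpoly_eq_finrank_iff_notMem_range (hprime : (Module.finrank K L).Prime)
    (x : L) :
    (minpoly K x).natDegree = Module.finrank K L ↔ x ∉ (algebraMap K L).range := by
  have hdvd := minpoly.degree_dvd (.of_finite K x : IsIntegral K x)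
  have := hprime.one_lt
  rw [← minpoly.natDegree_eq_one_iff]
  rcases (Nat.dvd_prime hprime).1 hdvd with h | h <;> rw [h] <;> omega

variable {x : L}

theorem adjoin_eq_top_of_natDegree_minpoly_eq
    (hx : (minpoly K x).natDegree = Module.finrank K L) : Algebra.adjoin K {x} = ⊤ := by
  have hint : IsIntegral K x := .of_finite K x
  rw [← IntermediateField.adjoin_simple_toSubalgebra_of_isAlgebraic hint.isAlgebraic,
    (Field.primitive_element_iff_minpoly_natDegree_eq K x).2 hx,
    IntermediateField.top_toSubalgebra]

theorem norm_eq_neg_one_pow_mul_coeff_zero_minpoly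
    (hx : (minpoly K x).natDegree = Module.finrank K L) :
    Algebra.norm K x = (-1) ^ Module.finrank K L * (minpoly K x).coeff 0 := by
  have h := Algebra.PowerBasis.norm_gen_eq_coeff_zero_minpoly
    (PowerBasis.ofAdjoinEqTop (.of_finite K x) (adjoin_eq_top_of_natDegree_minpoly_eq hx))
  rwa [← PowerBasis.finrank, PowerBasis.ofAdjoinEqTop_gen] at h

theorem trace_eq_neg_coeff_minpoly (hx : (minpoly K x).natDegree = Module.finrank K L) :
    Algebra.trace K L x = -(minpoly K x).coeff (Module.finrank K L - 1) := by
  have h := PowerBasis.trace_gen_eq_nextCoeff_minpoly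
    (PowerBasis.ofAdjoinEqTop (.of_finite K x) (adjoin_eq_top_of_natDegree_minpoly_eq hx))
  rwa [PowerBasis.ofAdjoinEqTop_gen,
    nextCoeff_of_natDegree_pos (hx ▸ Module.finrank_pos), hx] at h

end Field

variable {F E : Type*} [Field F] [Finite F] [Field E] [Algebra F E]

theorem splits_map_of_irreducible_of_natDegree_dvd_finrank [Finite E] {f : F[X]}
    (hf : Irreducible f) (hdvd : f.natDegree ∣ Module.finrank F E) :
    (f.map (algebraMap F E)).Splits := by
  have := Fintype.ofFinite E
  have hcard : Fintype.card E = Nat.card F ^ Module.finrank F E := by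
    rw [← Nat.card_eq_fintype_card, Module.natCard_eq_pow_finrank (K := F)]
  have hsplits := (FiniteField.isSplittingField_sub E F).splits
  rw [hcard] at hsplits
  refine hsplits.of_dvd (Polynomial.map_ne_zero ?_)
    (Polynomial.map_dvd _ (hf.natDegree_dvd_iff_dvd_X_pow_card_pow_sub_X.1 hdvd))
  exact FiniteField.X_pow_card_pow_sub_X_ne_zero _ Module.finrank_pos.ne' Finite.one_lt_card

variable [Fintype E]

theorem card_minpoly_eq {f : F[X]} (hmonic : f.Monic) (hf : Irreducible f)
    (hdvd : f.natDegree ∣ Module.finrank F E) :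
    #{x : E | minpoly F x = f} = f.natDegree := by
  rw [← card_rootSet_eq_natDegree (PerfectField.separable_of_irreducible hf)
    (splits_map_of_irreducible_of_natDegree_dvd_finrank (E := E) hf hdvd), Fintype.card_subtype]
  congr 1
  ext x
  rw [Finset.mem_filter_univ, Finset.mem_filter_univ, mem_rootSet_of_ne hf.ne_zero]
  constructor
  · rintro rfl
    exact minpoly.aeval F x
  · exact fun hx => (minpoly.eq_of_irreducible_of_monic hf hx hmonic).symm

theorem mul_card_monic_irreducible {n : ℕ} (hn : n ∣ Module.finrank F E) (P : F[X] → Prop) :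
    n * Nat.card {f : F[X] // f.Monic ∧ f.natDegree = n ∧ Irreducible f ∧ P f} =
      #{x : E | (minpoly F x).natDegree = n ∧ P (minpoly F x)} := by
  set S : Finset E := {x : E | (minpoly F x).natDegree = n ∧ P (minpoly F x)}
  have hmonic (x : E) : (minpoly F x).Monic := minpoly.monic (.of_finite F x)
  have hirr (x : E) : Irreducible (minpoly F x) := minpoly.irreducible (.of_finite F x)
  have himage : Nat.card {f : F[X] // f.Monic ∧ f.natDegree = n ∧ Irreducible f ∧ P f} =
      #(S.image (minpoly F)) := by
    refine Nat.subtype_card _ fun f => ?_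
    simp only [Finset.mem_image, S, Finset.mem_filter_univ]
    constructor
    · rintro ⟨x, ⟨hdeg, hP⟩, rfl⟩
      exact ⟨hmonic x, hdeg, hirr x, hP⟩
    · rintro ⟨hf, rfl, hf_irr, hP⟩
      obtain ⟨x, hx⟩ := Finset.card_pos.1
        ((card_minpoly_eq (E := E) hf hf_irr hn).symm ▸ hf_irr.natDegree_pos)
      obtain rfl := (Finset.mem_filter_univ x).1 hx
      exact ⟨x, ⟨rfl, hP⟩, rfl⟩
  have hfiber (f : F[X]) (hf : f ∈ S.image (minpoly F)) : #{y ∈ S | minpoly F y = f} = n := by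
    obtain ⟨x, hx, rfl⟩ := Finset.mem_image.1 hf
    obtain ⟨hdeg, hP⟩ := (Finset.mem_filter_univ x).1 hx
    have hfilter : {y ∈ S | minpoly F y = minpoly F x} =
        ({y : E | minpoly F y = minpoly F x} : Finset E) := by
      ext y
      simp only [S, Finset.mem_filter, Finset.mem_univ, true_and, and_iff_right_iff_imp]
      intro hy
      exact hy ▸ ⟨hdeg, hP⟩
    rw [hfilter, card_minpoly_eq (hmonic x) (hirr x) (hdeg ▸ hn), hdeg]
  rw [himage, Finset.card_eq_sum_card_image (minpoly F) S, Finset.sum_const_nat hfiber, mul_comm]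

end Minpoly

section Counting

variable {F : Type*} [Field F] [Fintype F]

theorem ringChar_ne_two_of_two_dvd_card_sub_one (h : 2 ∣ Fintype.card F - 1) : ringChar F ≠ 2 := by
  intro hF
  have heven := FiniteField.even_card_of_char_two hF
  have hpos : 0 < Fintype.card F := Fintype.card_pos
  omega

variable [DecidableEq F] {g : Fˣ} {m h : ℕ}

theorem finrank_mul_PP {E : Type*} [Field E] [Fintype E] [DecidableEq E] [Algebra F E]
    (hF : ringChar F ≠ 2) (hprime : (Module.finrank F E).Prime)
    (hg : ∀ u : Fˣ, u ∈ Subgroup.zpowers g) (hh : h < 2) (a : F) :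
    Module.finrank F E * PP F (g : F) (Module.finrank F E) 2 h a =
      #{x : E | (Algebra.trace F E x = a ∧ quadraticChar E x = (-1) ^ h) ∧
        x ∉ (algebraMap F E).range} := by
  rw [PP, mul_card_monic_irreducible dvd_rfl]
  congr 1
  ext x
  simp only [Finset.mem_filter, Finset.mem_univ, true_and]
  rw [and_comm (b := x ∉ _), ← natDegree_minpoly_eq_finrank_iff_notMem_range hprime]
  refine and_congr_right fun hx => ?_
  rw [exists_eq_generator_pow_iff hF hg hh, ← norm_eq_neg_one_pow_mul_coeff_zero_minpoly hx,
    quadraticChar_norm, trace_eq_neg_coeff_minpoly hx, neg_eq_iff_eq_neg]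

theorem two_mul_finrank_mul_PP (E : Type*) [Field E] [Finite E] [Algebra F E]
    (hF : ringChar F ≠ 2) (hprime : (Module.finrank F E).Prime) {k : ℕ}
    (hk : Module.finrank F E = 2 * k + 1) (hg : ∀ u : Fˣ, u ∈ Subgroup.zpowers g) (hh : h < 2)
    (a : F) :
    (2 * (Module.finrank F E * PP F (g : F) (Module.finrank F E) 2 h a) : ℤ) =
      (Fintype.card F : ℤ) ^ (Module.finrank F E - 1) - (if a = 0 then 1 else 0) +
        (-1) ^ h * ((Fintype.card F : ℤ) ^ k * quadraticChar F ((-1) ^ k * a)) -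
        2 * #{x : F | (Module.finrank F E : F) * x = a ∧ quadraticChar F x = (-1) ^ h} := by
  have := Fintype.ofFinite E
  have hsplit := Finset.card_filter_add_card_filter_not
    (s := {x : E | Algebra.trace F E x = a ∧ quadraticChar E x = (-1) ^ h})
    (fun x => x ∈ (algebraMap F E).range)
  rw [Finset.filter_filter, Finset.filter_filter,
    card_mem_range_trace_eq_and_quadraticChar_eq ⟨k, hk⟩,
    ← finrank_mul_PP hF hprime hg hh] at hsplit
  have htotal := two_mul_card_trace_eq_and_quadraticChar_eq (E := E) a (neg_one_pow_eq_or ℤ h)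
  rw [← hsplit, traceCharSum_eq hF hk] at htotal
  push_cast at htotal
  linarith

theorem two_mul_mul_PP (hF : ringChar F ≠ 2) (hm : m.Prime) (hm2 : 2 < m)
    (hg : ∀ u : Fˣ, u ∈ Subgroup.zpowers g) (hh : h < 2) (a : F) :
    (2 * (m * PP F (g : F) m 2 h a) : ℤ) =
      (Fintype.card F : ℤ) ^ (m - 1) - (if a = 0 then 1 else 0) +
        (-1) ^ h * ((Fintype.card F : ℤ) ^ ((m - 1) / 2) *
          quadraticChar F ((-1) ^ ((m - 1) / 2) * a)) -
        2 * #{x : F | (m : F) * x = a ∧ quadraticChar F x = (-1) ^ h} := by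
  have : Fact (ringChar F).Prime := ⟨CharP.char_is_prime F _⟩
  have : NeZero m := ⟨hm.ne_zero⟩
  let E := FiniteField.Extension F (ringChar F) m
  have hE : Module.finrank F E = m := FiniteField.finrank_extension F (ringChar F) m
  obtain ⟨k, hk⟩ := hm.odd_of_ne_two hm2.ne'
  obtain rfl : (m - 1) / 2 = k := by omega
  simpa only [hE] using two_mul_finrank_mul_PP E hF (hE.symm ▸ hm) (hE.trans hk) hg hh a

theorem PP_of_natCast_eq_zero (hF : ringChar F ≠ 2) (hm : m.Prime) (hm2 : 2 < m)
    (hg : ∀ u : Fˣ, u ∈ Subgroup.zpowers g) (hh : h < 2) (a : F) (hm0 : (m : F) = 0) :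
    (PP F (g : F) m 2 h a : ℚ) =
      ((Fintype.card F : ℚ) ^ (m - 1) - (if a = 0 then (Fintype.card F : ℚ) else 0) +
        (-1) ^ h * (Fintype.card F : ℚ) ^ ((m - 1) / 2) *
          (quadraticChar F ((-1) ^ ((m - 1) / 2) * a) : ℚ)) / (2 * m) := by
  have hbase : (2 * #{x : F | (m : F) * x = a ∧ quadraticChar F x = (-1) ^ h} : ℤ) =
      if a = 0 then (Fintype.card F : ℤ) - 1 else 0 := by
    simp only [hm0, zero_mul]
    split_ifs with ha
    · simpa only [ha, true_and] using two_mul_card_quadraticChar_eq hF (neg_one_pow_eq_or ℤ h)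
    · simp only [Ne.symm ha, false_and, Finset.filter_false, Finset.card_empty, Nat.cast_zero,
        mul_zero]
  have hcount := congrArg (Int.cast : ℤ → ℚ) (two_mul_mul_PP hF hm hm2 hg hh a)
  rw [hbase] at hcount
  rw [eq_div_iff (mul_ne_zero two_ne_zero (Nat.cast_ne_zero.2 hm.ne_zero))]
  split_ifs at hcount ⊢ <;> push_cast at hcount <;> linear_combination hcount

theorem PP_of_natCast_ne_zero (hF : ringChar F ≠ 2) (hm : m.Prime) (hm2 : 2 < m)
    (hg : ∀ u : Fˣ, u ∈ Subgroup.zpowers g) (hh : h < 2) (a : F) (hm0 : (m : F) ≠ 0) :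
    (PP F (g : F) m 2 h a : ℚ) =
      ((Fintype.card F : ℚ) ^ (m - 1) +
        (-1) ^ h * (Fintype.card F : ℚ) ^ ((m - 1) / 2) *
          (quadraticChar F ((-1) ^ ((m - 1) / 2) * a) : ℚ) -
        (-1) ^ h * (quadraticChar F ((m : F) * a) : ℚ) - 1) / (2 * m) := by
  have hcount := congrArg (Int.cast : ℤ → ℚ) (two_mul_mul_PP hF hm hm2 hg hh a)
  rw [two_mul_card_mul_eq_and_quadraticChar_eq hm0 a (neg_one_pow_eq_or ℤ h)] at hcount
  rw [eq_div_iff (mul_ne_zero two_ne_zero (Nat.cast_ne_zero.2 hm.ne_zero))]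
  push_cast at hcount
  linear_combination hcount

end Counting

end FinsetNotation

/-- The values of `P_m(a,2,h)` for a prime `m > 2` and `s = 2` (Carlitz's case), with
`S = (−1)^h·q^{(m−1)/2}·ρ((−1)^{(m−1)/2}·a)` and `ρ` the quadratic character of `F`. -/
theorem stmt10 (p r m h : ℕ) [Fact p.Prime] (hr : 0 < r) (hm : m.Prime) (hm2 : 2 < m)
    (F : Type*) [Field F] [Fintype F] [DecidableEq F]
    (hF : Fintype.card F = p ^ r)
    (g : Fˣ) (hg : ∀ u : Fˣ, u ∈ Subgroup.zpowers g)
    (hsq : 2 ∣ Fintype.card F - 1) (hh : h < 2) (a : F) :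
    (a = 0 → m = p →
      (PP F (g : F) m 2 h a : ℚ) =
        ((Fintype.card F : ℚ) ^ (p - 1) - (Fintype.card F : ℚ)) / (2 * p)) ∧
    (a = 0 → m ≠ p →
      (PP F (g : F) m 2 h a : ℚ) = ((Fintype.card F : ℚ) ^ (m - 1) - 1) / (2 * m)) ∧
    (a ≠ 0 → m = p →
      (PP F (g : F) m 2 h a : ℚ) =
        ((Fintype.card F : ℚ) ^ (p - 1) +
          (-1 : ℚ) ^ h * (Fintype.card F : ℚ) ^ ((m - 1) / 2) *
            (quadraticChar F ((-1 : F) ^ ((m - 1) / 2) * a) : ℚ)) / (2 * p)) ∧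
    (a ≠ 0 → m ≠ p →
      (PP F (g : F) m 2 h a : ℚ) =
        ((Fintype.card F : ℚ) ^ (m - 1) +
          (-1 : ℚ) ^ h * (Fintype.card F : ℚ) ^ ((m - 1) / 2) *
            (quadraticChar F ((-1 : F) ^ ((m - 1) / 2) * a) : ℚ) -
          (-1 : ℚ) ^ h * (quadraticChar F ((m : F) * a) : ℚ) - 1) / (2 * m)) := by
  have hF2 : ringChar F ≠ 2 := ringChar_ne_two_of_two_dvd_card_sub_one hsq
  have : CharP F p := charP_of_card_eq_prime_pow hF
  have hm0 : (m : F) = 0 ↔ m = p := by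
    rw [CharP.cast_eq_zero_iff F p, Nat.prime_dvd_prime_iff_eq Fact.out hm, eq_comm]
  have hdvd := PP_of_natCast_eq_zero hF2 hm hm2 hg hh a
  have hndvd := PP_of_natCast_ne_zero hF2 hm hm2 hg hh a
  refine ⟨?_, ?_, ?_, ?_⟩
  · rintro rfl rfl
    simpa using hdvd (hm0.2 rfl)
  · rintro rfl hmp
    simpa using hndvd (mt hm0.1 hmp)
  · rintro ha rfl
    simpa only [if_neg ha, sub_zero] using hdvd (hm0.2 rfl)
  · exact fun _ hmp => hndvd (mt hm0.1 hmp)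

end
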